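/- arXiv:1306.1386 — 2 statements merged into one kernel-verified Lean document; each statement's English description precedes it below -/
import Mathlib

section
/- Let n, k be positive integers with 1 ≤ k ≤ n−1, let α ≥ 1 be a real number, and let G be a connected finite simple graph on n vertices with vertex connectivity at most k. Then S_α(G) ≤ b_α(n,k), where b_α(n,k) = k(n−2)^α + (n−k−2)(n−3)^α + [n−2+k/2 + (1/2)·√((k−2n)² + 16(k−n+1))]^α + [n−2+k/2 − (1/2)·√((k−2n)² + 16(k−n+1))]^α, with equality if and only if G is isomorphic to K_k ∨ (K_1 ∪ K_{n−k−1}). -/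
/-!
The function `S α` is strictly increasing under adding edges: `Q H - Q G = Q (H \ G)` is positive
semidefinite for `G ≤ H`, and the trace of the `α`-th power is monotone by Peierls' inequality,
that is, by the convexity of `x ↦ x ^ α` (`sum_rpow_eigenvalues_le`, `S_mono`). A graph of vertex
connectivity at most `k` has `k` vertices whose complement splits into parts of sizes `i` and
`n - k - i` with no edges in between (`exists_sep`), so it is a spanning subgraph of
`K_k ∨ (K_i ∪ K_{n-k-i})` (`exists_le_comap`). In the degenerate case `k = n - 1` this is the
complete graph, with `i = 1`.

The spectrum of `K_k ∨ (K_i ∪ K_{n-k-i})` comes from its characteristic polynomial, a rank-three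
perturbation of a product of linear factors (`S_Gik`). For `i = 1` it gives the bound `b α n k`
exactly (`S_Gik_one`), and if both parts have at least two vertices then termwise comparison and
convexity give a strictly smaller value (`S_Gik_lt`). Equality thus forces `i = 1`, and then strict
monotonicity leaves only the extremal graph.
-/

open Matrix Finset

noncomputable section

namespace SLP

variable {V : Type*} [Fintype V] [DecidableEq V]

/-- The signless Laplacian matrix `Q(G) = D(G) + A(G)` of a finite simple graph. -/
def Q (G : SimpleGraph V) : Matrix V V ℝ :=
  letI : DecidableRel G.Adj := Classical.decRel _
  G.degMatrix ℝ + G.adjMatrix ℝ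

lemma Q_isHermitian (G : SimpleGraph V) : (Q G).IsHermitian := by
  letI : DecidableRel G.Adj := Classical.decRel _
  have h : Q G = G.degMatrix ℝ + G.adjMatrix ℝ := rfl
  rw [h, Matrix.IsHermitian]
  ext i j
  simp [Matrix.conjTranspose_apply, SimpleGraph.degMatrix, Matrix.diagonal,
    SimpleGraph.adjMatrix_apply, SimpleGraph.adj_comm]
  rcases eq_or_ne i j with rfl | hij
  · simp
  · simp [hij, Ne.symm hij]

/-- The (unordered) signless Laplacian eigenvalues of `G`, listed with multiplicity
(indexed by the vertices). -/
def eigs (G : SimpleGraph V) : V → ℝ := (Q_isHermitian G).eigenvalues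

/-- `S α G`: the sum of the α-th (real) powers of the nonzero signless Laplacian
eigenvalues of `G`. -/
def S (α : ℝ) (G : SimpleGraph V) : ℝ :=
  ∑ v ∈ Finset.univ.filter (fun v => eigs G v ≠ 0), eigs G v ^ α

/-- The join `G ∨ H` of two graphs: the disjoint union together with all edges
joining a vertex of `G` to a vertex of `H`. -/
def join {α β : Type*} (G : SimpleGraph α) (H : SimpleGraph β) : SimpleGraph (α ⊕ β) :=
  (Gᶜ ⊕g Hᶜ)ᶜ

/-- The graph `G(i) = K_k ∨ (K_i ∪ K_{n-k-i})`. -/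
def Gik (n k i : ℕ) : SimpleGraph (Fin k ⊕ (Fin i ⊕ Fin (n - k - i))) :=
  join (⊤ : SimpleGraph (Fin k))
    ((⊤ : SimpleGraph (Fin i)) ⊕g (⊤ : SimpleGraph (Fin (n - k - i))))

/-- `G` has vertex connectivity at most `k`: either `k ≥ n - 1`, or there is a set of
at most `k` vertices whose deletion leaves a disconnected graph. -/
def ConnAtMost (G : SimpleGraph V) (k : ℕ) : Prop :=
  Fintype.card V ≤ k + 1 ∨
    ∃ U : Finset V, U.card ≤ k ∧ ¬ (G.induce ((↑U : Set V)ᶜ)).Connected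

/-- The bound `b_α(n,k)`. -/
def b (α : ℝ) (n k : ℕ) : ℝ :=
  k * ((n : ℝ) - 2) ^ α + ((n : ℝ) - k - 2) * ((n : ℝ) - 3) ^ α
    + ((n : ℝ) - 2 + k / 2
        + (1 / 2) * Real.sqrt (((k : ℝ) - 2 * n) ^ 2 + 16 * ((k : ℝ) - n + 1))) ^ α
    + ((n : ℝ) - 2 + k / 2
        - (1 / 2) * Real.sqrt (((k : ℝ) - 2 * n) ^ 2 + 16 * ((k : ℝ) - n + 1))) ^ α

/-! ### Monotonicity of the trace of a power -/

/-- The trace of the `α`-th power is monotone on positive semidefinite matrices. In an orthonormal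
eigenbasis `u_i` of `A` one has `λ_i(A) = ⟨u_i, A u_i⟩ ≤ ⟨u_i, B u_i⟩`, and
`∑ i, ⟨u_i, B u_i⟩ ^ α` is at most the trace of `B ^ α` by Peierls' inequality. -/
lemma sum_rpow_eigenvalues_le {n : Type*} [Fintype n] [DecidableEq n] {A B : Matrix n n ℝ}
    (hA : A.IsHermitian) (hB : B.IsHermitian) (hA0 : A.PosSemidef) (hAB : (B - A).PosSemidef)
    {α : ℝ} (hα : 1 ≤ α) :
    ∑ i, hA.eigenvalues i ^ α ≤ ∑ i, hB.eigenvalues i ^ α ∧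
      (A.trace < B.trace → ∑ i, hA.eigenvalues i ^ α < ∑ i, hB.eigenvalues i ^ α) := by
  have hα0 : 0 < α := by linarith
  have hAe : ∀ i, 0 ≤ hA.eigenvalues i := hA0.eigenvalues_nonneg
  have hB0 : B.PosSemidef := by simpa using hA0.add hAB
  have hBe : ∀ i, 0 ≤ hB.eigenvalues i := hB0.eigenvalues_nonneg
  set U : Matrix n n ℝ := (hA.eigenvectorUnitary : Matrix n n ℝ) with hU
  set W : Matrix n n ℝ := (hB.eigenvectorUnitary : Matrix n n ℝ) with hW
  have hU1 : Uᴴ * U = 1 := (Unitary.mem_iff.1 hA.eigenvectorUnitary.2).1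
  have hU2 : U * Uᴴ = 1 := (Unitary.mem_iff.1 hA.eigenvectorUnitary.2).2
  have hW1 : Wᴴ * W = 1 := (Unitary.mem_iff.1 hB.eigenvectorUnitary.2).1
  have hW2 : W * Wᴴ = 1 := (Unitary.mem_iff.1 hB.eigenvectorUnitary.2).2
  have sA : A = U * diagonal hA.eigenvalues * Uᴴ := by
    have := hA.spectral_theorem
    rwa [Unitary.conjStarAlgAut_apply] at this
  have sB : B = W * diagonal hB.eigenvalues * Wᴴ := by
    have := hB.spectral_theorem
    rwa [Unitary.conjStarAlgAut_apply] at this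
  set P : Matrix n n ℝ := Uᴴ * W with hP
  have hP1 : P * Pᴴ = 1 := by
    rw [hP, conjTranspose_mul, conjTranspose_conjTranspose, Matrix.mul_assoc,
      ← Matrix.mul_assoc W, hW2, Matrix.one_mul, hU1]
  have hP2 : Pᴴ * P = 1 := by
    rw [hP, conjTranspose_mul, conjTranspose_conjTranspose, Matrix.mul_assoc,
      ← Matrix.mul_assoc U, hU2, Matrix.one_mul, hW1]
  have cA : Uᴴ * A * U = diagonal hA.eigenvalues := by
    conv_lhs => rw [sA]
    rw [show Uᴴ * (U * diagonal hA.eigenvalues * Uᴴ) * U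
      = (Uᴴ * U) * diagonal hA.eigenvalues * (Uᴴ * U) by simp only [Matrix.mul_assoc], hU1]
    simp
  have cB : Uᴴ * B * U = P * diagonal hB.eigenvalues * Pᴴ := by
    conv_lhs => rw [sB]
    simp only [hP, conjTranspose_mul, conjTranspose_conjTranspose, Matrix.mul_assoc]
  have row : ∀ i, ∑ j, P i j ^ 2 = 1 := fun i => by
    have := congrFun (congrFun hP1 i) i
    simpa [Matrix.mul_apply, pow_two] using this
  have col : ∀ j, ∑ i, P i j ^ 2 = 1 := fun j => by
    have := congrFun (congrFun hP2 j) j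
    simpa [Matrix.mul_apply, pow_two] using this
  have dB : ∀ i, (Uᴴ * B * U) i i = ∑ j, P i j ^ 2 * hB.eigenvalues j := fun i => by
    rw [cB, Matrix.mul_apply]
    refine Finset.sum_congr rfl fun j _ => ?_
    simp [Matrix.mul_diagonal]; ring
  have dA : ∀ i, (Uᴴ * A * U) i i = hA.eigenvalues i := fun i => by rw [cA]; simp
  have hle : ∀ i, hA.eigenvalues i ≤ (Uᴴ * B * U) i i := fun i => by
    have h := (hAB.conjTranspose_mul_mul_same U).diag_nonneg (i := i)
    rw [Matrix.mul_sub, Matrix.sub_mul, Matrix.sub_apply, dA] at h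
    linarith
  -- Jensen's inequality, then the columns of the doubly stochastic matrix `P i j ^ 2`
  have jensen : ∑ i, ((Uᴴ * B * U) i i) ^ α ≤ ∑ i, hB.eigenvalues i ^ α := by
    calc ∑ i, ((Uᴴ * B * U) i i) ^ α ≤ ∑ i, ∑ j, P i j ^ 2 * hB.eigenvalues j ^ α := by
          refine Finset.sum_le_sum fun i _ => ?_
          rw [dB]
          exact (convexOn_rpow hα).map_sum_le (fun j _ => sq_nonneg _) (row i)
            (fun j _ => hBe j)
      _ = ∑ i, hB.eigenvalues i ^ α := by
          rw [Finset.sum_comm]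
          simp_rw [← Finset.sum_mul, col, one_mul]
  refine ⟨le_trans (Finset.sum_le_sum fun i _ =>
    Real.rpow_le_rpow (hAe i) (hle i) hα0.le) jensen, fun ht => lt_of_lt_of_le ?_ jensen⟩
  obtain ⟨i, hi⟩ : ∃ i, hA.eigenvalues i < (Uᴴ * B * U) i i := by
    by_contra! hcon
    have h1 : (Uᴴ * B * U).trace ≤ (Uᴴ * A * U).trace :=
      Finset.sum_le_sum fun i _ => by rw [diag_apply, diag_apply, dA]; exact hcon i
    have h2 : ∀ M : Matrix n n ℝ, (Uᴴ * M * U).trace = M.trace := fun M => by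
      rw [Matrix.trace_mul_comm, ← Matrix.mul_assoc, hU2, Matrix.one_mul]
    rw [h2, h2] at h1
    linarith
  exact Finset.sum_lt_sum (fun i _ => Real.rpow_le_rpow (hAe i) (hle i) hα0.le)
    ⟨i, Finset.mem_univ i, Real.rpow_lt_rpow (hAe i) hi hα0⟩

/-! ### The signless Laplacian -/

/-- The zero eigenvalues may be included in `S`, since `0 ^ α = 0`. -/
lemma S_eq_sum (α : ℝ) (hα : 1 ≤ α) (G : SimpleGraph V) : S α G = ∑ v, eigs G v ^ α := by
  rw [S, Finset.sum_filter]
  refine Finset.sum_congr rfl fun v _ => ?_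
  split_ifs with h
  · rfl
  · rw [not_not.1 h, Real.zero_rpow (by linarith)]

lemma S_eq_roots (α : ℝ) (hα : 1 ≤ α) (G : SimpleGraph V) :
    S α G = ((Q G).charpoly.roots.map (fun x => x ^ α)).sum := by
  rw [S_eq_sum α hα, (Q_isHermitian G).roots_charpoly_eq_eigenvalues]
  simp [eigs]

lemma Q_apply (G : SimpleGraph V) [DecidableRel G.Adj] (u v : V) :
    Q G u v = (if u = v then ∑ w, (if G.Adj u w then (1 : ℝ) else 0) else 0)
      + if G.Adj u v then 1 else 0 := by
  have hQ : Q G = G.degMatrix ℝ + G.adjMatrix ℝ := by unfold Q; congr!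
  rw [hQ, Matrix.add_apply, SimpleGraph.adjMatrix_apply, SimpleGraph.degMatrix, diagonal_apply]
  congr 1
  · split_ifs with h
    · simp [← SimpleGraph.card_neighborFinset_eq_degree, SimpleGraph.neighborFinset_eq_filter]
    · rfl

lemma S_iso {W : Type*} [Fintype W] [DecidableEq W] (α : ℝ) (hα : 1 ≤ α) {G : SimpleGraph V}
    {H : SimpleGraph W} (e : G ≃g H) : S α G = S α H := by
  classical
  have : Q H = Matrix.reindex e.toEquiv e.toEquiv (Q G) := by
    ext u v
    rw [Matrix.reindex_apply, Matrix.submatrix_apply, Q_apply, Q_apply]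
    have h : ∀ u v, G.Adj (e.toEquiv.symm u) (e.toEquiv.symm v) ↔ H.Adj u v := fun u v => by
      rw [← e.map_adj_iff]
      change H.Adj (e.toEquiv (e.toEquiv.symm u)) (e.toEquiv (e.toEquiv.symm v)) ↔ _
      simp only [Equiv.apply_symm_apply]
    simp only [h, EmbeddingLike.apply_eq_iff_eq, ← Equiv.sum_comp e.toEquiv.symm]
  rw [S_eq_roots α hα, S_eq_roots α hα, this, Matrix.charpoly_reindex]

lemma Q_posSemidef (G : SimpleGraph V) : (Q G).PosSemidef := by
  classical
  refine Matrix.PosSemidef.of_dotProduct_mulVec_nonneg (Q_isHermitian G) fun x => ?_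
  have h : 2 * (star x ⬝ᵥ (Q G *ᵥ x))
      = ∑ u, ∑ v, (if G.Adj u v then (x u + x v) ^ 2 else 0) := by
    have e1 : ∑ u, ∑ v, (if G.Adj u v then x u ^ 2 else 0)
        = ∑ u, ∑ v, (if G.Adj u v then x v ^ 2 else 0) := by
      rw [Finset.sum_comm]
      exact Finset.sum_congr rfl fun u _ => Finset.sum_congr rfl fun v _ => by
        simp only [G.adj_comm v u]
    have e2 : star x ⬝ᵥ (Q G *ᵥ x) = ∑ u, ∑ v, (if G.Adj u v then x u ^ 2 else 0)
        + ∑ u, ∑ v, (if G.Adj u v then x u * x v else 0) := by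
      simp only [dotProduct, mulVec, Q_apply, ← Finset.sum_add_distrib]
      refine Finset.sum_congr rfl fun u _ => ?_
      simp only [add_mul, Finset.sum_add_distrib, ite_mul, zero_mul, Finset.sum_ite_eq,
        Finset.mem_univ, if_true, one_mul, mul_add, star_trivial, Finset.mul_sum, Finset.sum_mul,
        mul_ite, mul_zero]
      congr 1
      · exact Finset.sum_congr rfl fun v _ => by split_ifs <;> ring
    have e3 : ∑ u, ∑ v, (if G.Adj u v then (x u + x v) ^ 2 else 0)
        = ∑ u, ∑ v, (if G.Adj u v then x u ^ 2 else 0)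
        + ∑ u, ∑ v, (if G.Adj u v then x v ^ 2 else 0)
        + 2 * ∑ u, ∑ v, (if G.Adj u v then x u * x v else 0) := by
      simp only [Finset.mul_sum, ← Finset.sum_add_distrib]
      refine Finset.sum_congr rfl fun u _ => Finset.sum_congr rfl fun v _ => ?_
      split_ifs <;> ring
    rw [e3, e2, ← e1]; ring
  have : 0 ≤ ∑ u, ∑ v, (if G.Adj u v then (x u + x v) ^ 2 else 0) :=
    Finset.sum_nonneg fun u _ => Finset.sum_nonneg fun v _ => by positivity
  linarith

lemma Q_sub {G H : SimpleGraph V} (h : G ≤ H) : Q H - Q G = Q (H \ G) := by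
  classical
  have ha : ∀ u v, (if H.Adj u v then (1 : ℝ) else 0)
      = (if G.Adj u v then 1 else 0) + (if (H \ G).Adj u v then 1 else 0) := fun u v => by
    have := @h u v
    simp only [SimpleGraph.sdiff_adj]
    by_cases h1 : H.Adj u v <;> by_cases h2 : G.Adj u v <;> simp_all
  ext u v
  rw [Matrix.sub_apply, Q_apply, Q_apply, Q_apply]
  simp only [ha, Finset.sum_add_distrib]
  split_ifs <;> ring

/-- Adding edges strictly increases `S`: the difference of the signless Laplacians is the signless
Laplacian of the added edges, which is positive semidefinite with positive trace. -/
lemma S_mono (α : ℝ) (hα : 1 ≤ α) {G H : SimpleGraph V} (h : G ≤ H) :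
    S α G ≤ S α H ∧ (S α G = S α H → G = H) := by
  classical
  rw [S_eq_sum α hα, S_eq_sum α hα]
  have key := sum_rpow_eigenvalues_le (Q_isHermitian G) (Q_isHermitian H) (Q_posSemidef G)
    (by rw [Q_sub h]; exact Q_posSemidef _) hα
  refine ⟨key.1, fun heq => ?_⟩
  by_contra hne
  refine (key.2 ?_).ne heq
  rw [← sub_pos, ← Matrix.trace_sub, Q_sub h]
  obtain ⟨u, v, huv⟩ : ∃ u v, (H \ G).Adj u v := by
    by_contra! hcon
    refine hne (le_antisymm h fun u v huv => ?_)
    by_contra hG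
    exact hcon u v (by simp [huv, hG])
  have hd : ∀ u, (Q (H \ G)) u u = ∑ w, (if (H \ G).Adj u w then (1 : ℝ) else 0) := fun u => by
    rw [Q_apply]; simp
  refine Finset.sum_pos' (fun u _ => ?_) ⟨u, Finset.mem_univ u, ?_⟩
  · rw [diag_apply, hd]; positivity
  · rw [diag_apply, hd]
    exact Finset.sum_pos' (fun w _ => by positivity) ⟨v, Finset.mem_univ v, by simp only [if_pos huv, zero_lt_one]⟩

/-! ### The spectrum of `K_k ∨ (K_i ∪ K_{n-k-i})` -/

/-- The block (`0`, `1` or `2`) of a vertex of `K_k ∨ (K_i ∪ K_j)`. -/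
def blk {k i j : ℕ} : Fin k ⊕ (Fin i ⊕ Fin j) → Fin 3
  | .inl _ => 0
  | .inr (.inl _) => 1
  | .inr (.inr _) => 2

/-- The 0-1 matrix recording which blocks of `K_k ∨ (K_i ∪ K_j)` are completely joined. -/
def blockM : Matrix (Fin 3) (Fin 3) ℝ := !![1, 1, 1; 1, 1, 0; 1, 0, 1]

/-- The block indicator matrix. -/
def blockP (k i j : ℕ) : Matrix (Fin k ⊕ (Fin i ⊕ Fin j)) (Fin 3) ℝ :=
  Matrix.of fun u a => if blk u = a then 1 else 0

lemma adj_Gik {n k i : ℕ} (u v : Fin k ⊕ (Fin i ⊕ Fin (n - k - i))) :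
    (Gik n k i).Adj u v ↔ u ≠ v ∧ ¬ (blk u = 1 ∧ blk v = 2) ∧ ¬ (blk u = 2 ∧ blk v = 1) := by
  rcases u with u | u | u <;> rcases v with v | v | v <;> simp [Gik, join, blk]

/-- `Q` is a diagonal matrix plus a matrix of rank at most three. -/
lemma Q_Gik {n k i : ℕ} (h : k + i ≤ n) :
    Q (Gik n k i) = Matrix.diagonal
        (fun u => ![(n : ℝ) - 2, k + i - 2, n - i - 2] (blk u))
      + blockP k i (n - k - i) * blockM * (blockP k i (n - k - i))ᵀ := by
  classical
  have hM : ∀ u v, (if (Gik n k i).Adj u v then (1 : ℝ) else 0)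
      = blockM (blk u) (blk v) - if u = v then 1 else 0 := fun u v => by
    simp only [adj_Gik]
    rcases u with u | u | u <;> rcases v with v | v | v <;> simp [blk, blockM] <;>
      split_ifs <;> simp
  have hP : ∀ u v, (blockP k i (n - k - i) * blockM * (blockP k i (n - k - i))ᵀ) u v
      = blockM (blk u) (blk v) := fun u v => by
    simp [Matrix.mul_apply, blockP]
  have hc : (((n - k - i : ℕ)) : ℝ) = n - k - i := by
    rw [Nat.cast_sub (by omega), Nat.cast_sub (by omega)]
  ext u v
  rw [Q_apply, Matrix.add_apply, hP, Matrix.diagonal_apply]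
  simp only [hM]
  by_cases huv : u = v
  · subst huv
    simp only [if_true, Finset.sum_sub_distrib, Finset.sum_ite_eq, Finset.mem_univ,
      Fintype.sum_sum_type]
    rcases u with u | u | u <;> simp [blk, blockM, hc] <;> ring
  · simp [huv]

/-- When the diagonal part of `x - Q` is invertible, Sylvester's identity
`det (1 - MN) = det (1 - NM)` reduces the determinant of `x - Q` to a `3 × 3` one. Both sides are
multiplied by two linear factors so that no truncated exponents such as `i - 1` appear and the
empty block `n - k - i = 0` is covered. -/
lemma eval_charpoly_Gik {n k i : ℕ} (h : k + i ≤ n) (d x : ℝ)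
    (hd : 4 * d ^ 2 = ((k : ℝ) - 2 * n) ^ 2 + 16 * i * (k - n + i))
    (h0 : x - (n - 2) ≠ 0) (h1 : x - (k + i - 2) ≠ 0) (h2 : x - (n - i - 2) ≠ 0) :
    (Q (Gik n k i)).charpoly.eval x * ((x - (k + i - 2)) * (x - (n - i - 2)))
      = (x - (n - 2)) ^ k * (x - (k + i - 2)) ^ i * (x - (n - i - 2)) ^ (n - k - i)
        * ((x - (n - 2 + k / 2 + d)) * (x - (n - 2 + k / 2 - d))) := by
  have hc : (((n - k - i : ℕ)) : ℝ) = n - k - i := by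
    rw [Nat.cast_sub (by omega), Nat.cast_sub (by omega)]
  set δ : Fin 3 → ℝ := ![x - (n - 2), x - (k + i - 2), x - (n - i - 2)] with hδ
  have hδ0 : ∀ a, δ a ≠ 0 := by
    intro a; fin_cases a <;> simpa [hδ]
  set P := blockP k i (n - k - i) with hP
  let ε : Fin k ⊕ (Fin i ⊕ Fin (n - k - i)) → ℝ := fun u => δ (blk u)
  have hε : ∀ u, ε u * (ε u)⁻¹ = 1 := fun u => mul_inv_cancel₀ (hδ0 _)
  have e1 : Matrix.scalar _ x - Q (Gik n k i)
      = Matrix.diagonal ε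
        * (1 - (Matrix.diagonal (fun u => (ε u)⁻¹) * P * blockM) * Pᵀ) := by
    rw [Q_Gik h, Matrix.mul_sub, Matrix.mul_one]
    simp only [← Matrix.mul_assoc, Matrix.diagonal_mul_diagonal, hε]
    rw [show (Matrix.diagonal fun _ : Fin k ⊕ (Fin i ⊕ Fin (n - k - i)) => (1 : ℝ)) = 1 from
      Matrix.diagonal_one, Matrix.one_mul, ← sub_sub]
    congr 1
    rw [Matrix.scalar_apply, Matrix.diagonal_sub]
    congr 1
    funext u
    rcases u with u | u | u <;> simp [ε, blk, hδ]
  have e2 : Pᵀ * (Matrix.diagonal (fun u => (ε u)⁻¹) * P * blockM)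
      = Matrix.diagonal ![k * (δ 0)⁻¹, i * (δ 1)⁻¹, (n - k - i) * (δ 2)⁻¹] * blockM := by
    rw [← Matrix.mul_assoc]
    congr 1
    ext a b
    rw [Matrix.mul_apply]
    simp only [Matrix.diagonal_mul, Fintype.sum_sum_type, Matrix.transpose_apply]
    fin_cases a <;> fin_cases b <;> simp [hP, ε, blockP, blk, hc]
  rw [Matrix.eval_charpoly, e1, Matrix.det_mul, Matrix.det_one_sub_mul_comm, e2,
    Matrix.det_diagonal, Fintype.prod_sum_type, Fintype.prod_sum_type]
  have e3 : (1 - Matrix.diagonal ![k * (δ 0)⁻¹, i * (δ 1)⁻¹, (n - k - i) * (δ 2)⁻¹] * blockM).det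
      * ((x - (k + i - 2)) * (x - (n - i - 2)))
      = (x - (n - 2 + k / 2 + d)) * (x - (n - 2 + k / 2 - d)) := by
    have hd' : d ^ 2 = (((k : ℝ) - 2 * n) ^ 2 + 16 * i * (k - n + i)) / 4 := by linarith
    rw [show (x - (n - 2 + k / 2 + d)) * (x - (n - 2 + k / 2 - d))
      = (x - (n - 2 + k / 2)) ^ 2 - d ^ 2 by ring, hd', Matrix.det_fin_three]
    simp [blockM, hδ, Matrix.diagonal_mul]
    field_simp
    ring
  rw [← e3]
  simp [ε, blk, hδ]
  ring

open Polynomial in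
/-- The value of `S` on `K_k ∨ (K_i ∪ K_{n-k-i})`, whose spectrum consists of `n - 2` (`k` times),
`k + i - 2` (`i - 1` times), `n - i - 2` (`n - k - i - 1` times) and `n - 2 + k / 2 ± d`. If
`n = k + i` with `1 ≤ i`, the last multiplicity is `-1` and cancels against one of the last two
values, even where that value is negative. -/
lemma S_Gik {n k i : ℕ} (h : k + i ≤ n) (α : ℝ) (hα : 1 ≤ α) (d : ℝ)
    (hd : 4 * d ^ 2 = ((k : ℝ) - 2 * n) ^ 2 + 16 * i * (k - n + i)) :
    S α (Gik n k i) = k * ((n : ℝ) - 2) ^ α + (i - 1) * ((k : ℝ) + i - 2) ^ α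
      + ((n : ℝ) - k - i - 1) * ((n : ℝ) - i - 2) ^ α
      + ((n : ℝ) - 2 + k / 2 + d) ^ α + ((n : ℝ) - 2 + k / 2 - d) ^ α := by
  have hc : (((n - k - i : ℕ)) : ℝ) = n - k - i := by
    rw [Nat.cast_sub (by omega), Nat.cast_sub (by omega)]
  have hpoly : (Q (Gik n k i)).charpoly * ((X - C ((k : ℝ) + i - 2)) * (X - C ((n : ℝ) - i - 2)))
      = (X - C ((n : ℝ) - 2)) ^ k * (X - C ((k : ℝ) + i - 2)) ^ i
        * (X - C ((n : ℝ) - i - 2)) ^ (n - k - i)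
        * ((X - C ((n : ℝ) - 2 + k / 2 + d)) * (X - C ((n : ℝ) - 2 + k / 2 - d))) := by
    apply Polynomial.eq_of_infinite_eval_eq
    have hfin : ({(n : ℝ) - 2, (k : ℝ) + i - 2, (n : ℝ) - i - 2} : Set ℝ).Finite := by simp
    refine hfin.infinite_compl.mono fun x hx => ?_
    simp only [Set.mem_compl_iff, Set.mem_insert_iff, Set.mem_singleton_iff, not_or] at hx
    have := eval_charpoly_Gik h d x hd (sub_ne_zero.2 hx.1) (sub_ne_zero.2 hx.2.1)
      (sub_ne_zero.2 hx.2.2)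
    simpa only [Set.mem_ofPred_eq, eval_mul, eval_pow, eval_sub, eval_X, eval_C] using this
  have hne : ∀ a : ℝ, (X - C a : ℝ[X]) ≠ 0 := X_sub_C_ne_zero
  have hne0 := ((Q (Gik n k i)).charpoly_monic).ne_zero
  have hr := congrArg (fun p : ℝ[X] => (p.roots.map (fun x => x ^ α)).sum) hpoly
  have hrm : ∀ p q : ℝ[X], p ≠ 0 → q ≠ 0 → ((p * q).roots.map (fun x => x ^ α)).sum
      = (p.roots.map (fun x => x ^ α)).sum + (q.roots.map (fun x => x ^ α)).sum :=
    fun p q hp hq => by rw [roots_mul (mul_ne_zero hp hq), Multiset.map_add, Multiset.sum_add]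
  have hrp : ∀ (a : ℝ) (m : ℕ), (((X - C a : ℝ[X]) ^ m).roots.map (fun x => x ^ α)).sum
      = m * a ^ α := fun a m => by
    rw [roots_pow, roots_X_sub_C]
    simp [Multiset.map_nsmul, Multiset.sum_nsmul]
  have hr1 : ∀ (a : ℝ), ((X - C a : ℝ[X]).roots.map (fun x => x ^ α)).sum = a ^ α := fun a => by
    simp [roots_X_sub_C]
  have hnp : ∀ (a : ℝ) (m : ℕ), (X - C a : ℝ[X]) ^ m ≠ 0 := fun a m => pow_ne_zero _ (hne a)
  beta_reduce at hr
  rw [hrm _ _ hne0 (mul_ne_zero (hne _) (hne _)), hrm _ _ (hne _) (hne _),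
    hrm _ _ (mul_ne_zero (mul_ne_zero (hnp _ _) (hnp _ _)) (hnp _ _))
      (mul_ne_zero (hne _) (hne _)),
    hrm _ _ (mul_ne_zero (hnp _ _) (hnp _ _)) (hnp _ _), hrm _ _ (hnp _ _) (hnp _ _),
    hrm _ _ (hne _) (hne _)] at hr
  simp only [hrp, hr1, hc] at hr
  rw [S_eq_roots α hα]
  linarith

/-! ### The bound and the comparison of the extremal candidates -/

lemma S_Gik_one {n k : ℕ} (hkn : k + 1 ≤ n) (α : ℝ) (hα : 1 ≤ α) :
    S α (Gik n k 1) = b α n k := by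
  have hn : (k : ℝ) + 1 ≤ n := by exact_mod_cast hkn
  have hk : (0 : ℝ) ≤ k := Nat.cast_nonneg k
  have hD : 0 ≤ ((k : ℝ) - 2 * n) ^ 2 + 16 * ((k : ℝ) - n + 1) := by
    nlinarith [sq_nonneg ((n : ℝ) - k - 2)]
  rw [S_Gik hkn α hα (1 / 2 * √(((k : ℝ) - 2 * n) ^ 2 + 16 * ((k : ℝ) - n + 1)))
    (by rw [mul_pow, Real.sq_sqrt hD]; push_cast; ring), b]
  push_cast
  rw [show (n : ℝ) - 1 - 2 = n - 3 by ring]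
  ring

/-- Spreading two numbers with a fixed sum increases the sum of their `α`-th powers. -/
lemma rpow_pair_le {α : ℝ} (hα : 1 ≤ α) {c d e : ℝ} (hd : 0 ≤ d) (hde : d ≤ e) (hec : e ≤ c) :
    (c + d) ^ α + (c - d) ^ α ≤ (c + e) ^ α + (c - e) ^ α := by
  rcases hde.eq_or_lt with rfl | hlt
  · rfl
  have he : 0 < e := hd.trans_lt hlt
  have hs : 0 ≤ (1 + d / e) / 2 := by positivity
  have ht : 0 ≤ (1 - d / e) / 2 := by
    have : d / e ≤ 1 := (div_le_one he).2 hde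
    linarith
  have hp : c + e ∈ Set.Ici (0 : ℝ) := by simp only [Set.mem_Ici]; linarith
  have hm : c - e ∈ Set.Ici (0 : ℝ) := by simp only [Set.mem_Ici]; linarith
  have h1 := (convexOn_rpow hα).2 hp hm hs ht (by ring)
  have h2 := (convexOn_rpow hα).2 hm hp hs ht (by ring)
  simp only [smul_eq_mul] at h1 h2
  rw [show (1 + d / e) / 2 * (c + e) + (1 - d / e) / 2 * (c - e) = c + d by field_simp; ring] at h1
  rw [show (1 + d / e) / 2 * (c - e) + (1 - d / e) / 2 * (c + e) = c - d by field_simp; ring] at h2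
  linarith

/-- Both parts of the spectrum that depend on `i` favour `i = 1`: the `n - k - 2` eigenvalues
`k + i - 2`, `n - i - 2` are at most `n - 3`, some of them strictly, and the last pair of
eigenvalues has a sum independent of `i` and its largest spread at `i = 1`. -/
lemma S_Gik_lt {n k i : ℕ} (hk : 1 ≤ k) (hi : 2 ≤ i) (hj : k + i + 2 ≤ n) (α : ℝ) (hα : 1 ≤ α) :
    S α (Gik n k i) < b α n k := by
  have hk' : (1 : ℝ) ≤ k := by exact_mod_cast hk
  have hi' : (2 : ℝ) ≤ i := by exact_mod_cast hi
  have hj' : (k : ℝ) + i + 2 ≤ n := by exact_mod_cast hj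
  have hα0 : 0 < α := by linarith
  set D1 : ℝ := ((k : ℝ) - 2 * n) ^ 2 + 16 * ((k : ℝ) - n + 1) with hD1
  set D2 : ℝ := ((k : ℝ) - 2 * n) ^ 2 + 16 * i * (k - n + i) with hD2
  -- the identity `D2 = 4 (n - k - 2 i) ^ 2 + k (4 n - 3 k)` shows positivity
  have h2 : 0 ≤ D2 := by nlinarith [sq_nonneg ((n : ℝ) - k - 2 * i)]
  have h21 : D2 ≤ D1 := by
    nlinarith [mul_nonneg (show (0 : ℝ) ≤ i - 1 by linarith)
      (show (0 : ℝ) ≤ n - k - i - 1 by linarith)]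
  have hpair : ((n : ℝ) - 2 + k / 2 + 1 / 2 * √D2) ^ α + ((n : ℝ) - 2 + k / 2 - 1 / 2 * √D2) ^ α
      ≤ ((n : ℝ) - 2 + k / 2 + 1 / 2 * √D1) ^ α + ((n : ℝ) - 2 + k / 2 - 1 / 2 * √D1) ^ α := by
    -- the smaller number of the pair at `i = 1` is nonnegative because `k (n - 3) ≥ 0`
    refine rpow_pair_le hα (by positivity) (by gcongr) ?_
    have : √D1 ≤ 2 * n - 4 + k := by
      refine Real.sqrt_le_iff.2 ⟨by linarith, ?_⟩
      nlinarith [mul_nonneg (show (0 : ℝ) ≤ k by linarith) (show (0 : ℝ) ≤ n - 3 by linarith)]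
    linarith
  have t1 : ((k : ℝ) + i - 2) ^ α ≤ ((n : ℝ) - 3) ^ α :=
    Real.rpow_le_rpow (by linarith) (by linarith) hα0.le
  have t2 : ((n : ℝ) - i - 2) ^ α < ((n : ℝ) - 3) ^ α :=
    Real.rpow_lt_rpow (by linarith) (by linarith) hα0
  have t3 := mul_le_mul_of_nonneg_left t1 (show (0 : ℝ) ≤ i - 1 by linarith)
  have t4 := mul_lt_mul_of_pos_left t2 (show (0 : ℝ) < n - k - i - 1 by linarith)
  rw [S_Gik (by omega) α hα (1 / 2 * √D2) (by rw [mul_pow, Real.sq_sqrt h2, hD2]; ring), b,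
    ← hD1]
  have t5 : ((n : ℝ) - k - 2) * ((n : ℝ) - 3) ^ α
      = (i - 1) * ((n : ℝ) - 3) ^ α + (n - k - i - 1) * ((n : ℝ) - 3) ^ α := by ring
  linarith

/-! ### Graphs with small vertex connectivity -/

lemma card_blk (k i j : ℕ) (a : Fin 3) :
    Fintype.card {w : Fin k ⊕ (Fin i ⊕ Fin j) // blk w = a} = ![k, i, j] a := by
  rw [Fintype.card_subtype, Finset.card_filter]
  fin_cases a <;> simp [blk]

/-- Two disjoint vertex sets without edges between them, together with the remaining `k`
vertices, embed `G` as a spanning subgraph of `K_k ∨ (K_i ∪ K_{n-k-i})`. -/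
lemma exists_le_comap {n k i : ℕ} (hcard : Fintype.card V = n) (G : SimpleGraph V)
    (A B : Finset V) (hAB : Disjoint A B) (hG : ∀ u ∈ A, ∀ v ∈ B, ¬ G.Adj u v)
    (hA : #A = i) (hB : #A + #B + k = n) :
    ∃ e : V ≃ Fin k ⊕ (Fin i ⊕ Fin (n - k - i)), G ≤ (Gik n k i).comap e := by
  -- `col` sorts the vertices into blocks; any bijection respecting the blocks will do
  let col : V → Fin 3 := fun v => if v ∈ A then 1 else if v ∈ B then 2 else 0
  have c1 : ∀ v, col v = 1 ↔ v ∈ A := fun v => by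
    simp only [col]; split_ifs <;> simp_all
  have c2 : ∀ v, col v = 2 ↔ v ∈ B := fun v => by
    have : v ∈ A → v ∉ B := fun h => Finset.disjoint_left.1 hAB h
    simp only [col]; split_ifs <;> simp_all
  have c0 : ∀ v, col v = 0 ↔ v ∉ A ∪ B := fun v => by
    simp only [col, Finset.mem_union]; split_ifs <;> simp_all
  have hcol : ∀ a, Fintype.card {v // col v = a} = ![k, i, n - k - i] a := fun a => by
    rw [Fintype.card_subtype]
    fin_cases a
    · simp only [Fin.zero_eta, c0]
      rw [show (Finset.univ.filter fun v => v ∉ A ∪ B) = (A ∪ B)ᶜ by ext; simp,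
        Finset.card_compl, Finset.card_union_of_disjoint hAB]
      simp; omega
    · simp [c1, hA]
    · simp [c2]; omega
  let E : ∀ a, {v // col v = a} ≃ {w : Fin k ⊕ (Fin i ⊕ Fin (n - k - i)) // blk w = a} :=
    fun a => Fintype.equivOfCardEq (by rw [hcol, card_blk])
  let e := (Equiv.sigmaFiberEquiv col).symm.trans
    ((Equiv.sigmaCongrRight E).trans (Equiv.sigmaFiberEquiv blk))
  have he : ∀ v, blk (e v) = col v := fun v => (E (col v) ⟨v, rfl⟩).2
  refine ⟨e, fun u v huv => ?_⟩
  rw [SimpleGraph.comap_adj, adj_Gik]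
  refine ⟨e.injective.ne huv.ne, ?_, ?_⟩
  · rw [he, he, c1, c2]
    exact fun h => hG u h.1 v h.2 huv
  · rw [he, he, c1, c2]
    exact fun h => hG v h.2 u h.1 huv.symm

/-- A graph with vertex connectivity at most `k` has exactly `k` vertices whose complement splits
into two parts without edges between them: surplus vertices of the two sides of a smaller
separator are moved into it. If `k = n - 1`, one part is a single vertex and the other is empty.
The parts are ordered so that a part of size one comes first. -/
lemma exists_sep {n k : ℕ} (hk : 1 ≤ k) (hkn : k ≤ n - 1) (hcard : Fintype.card V = n)
    (G : SimpleGraph V) (hvc : ConnAtMost G k) :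
    ∃ A B : Finset V, Disjoint A B ∧ (∀ u ∈ A, ∀ v ∈ B, ¬ G.Adj u v) ∧ #A + #B + k = n ∧
      (#A = 1 ∨ 2 ≤ #A ∧ 2 ≤ #B) := by
  classical
  by_cases hn : n ≤ k + 1
  · obtain ⟨v⟩ : Nonempty V := Fintype.card_pos_iff.1 (by omega)
    exact ⟨{v}, ∅, by simp, by simp, by simp; omega, by simp⟩
  obtain h | ⟨U, hU, hdis⟩ := hvc
  · omega
  have hne : Nonempty ((↑U : Set V)ᶜ : Set V) := by
    obtain ⟨v, hv⟩ : ∃ v, v ∉ U := by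
      by_contra! hcon
      have := Finset.card_le_card (fun v _ => hcon v : Finset.univ ⊆ U)
      rw [Finset.card_univ] at this
      omega
    exact ⟨⟨v, by simpa using hv⟩⟩
  obtain ⟨x, y, hxy⟩ : ∃ x y, ¬ (G.induce ((↑U : Set V)ᶜ)).Reachable x y := by
    by_contra! hcon
    exact hdis ⟨hcon⟩
  let A₀ : Finset V := Finset.univ.filter fun v =>
    ∃ h : v ∈ (↑U : Set V)ᶜ, (G.induce ((↑U : Set V)ᶜ)).Reachable x ⟨v, h⟩
  let B₀ : Finset V := Finset.univ.filter fun v =>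
    ∃ h : v ∈ (↑U : Set V)ᶜ, ¬ (G.induce ((↑U : Set V)ᶜ)).Reachable x ⟨v, h⟩
  have hdisj : Disjoint A₀ B₀ := Finset.disjoint_left.2 fun v hv hv' => by
    simp only [A₀, B₀, Finset.mem_filter, Finset.mem_univ, true_and] at hv hv'
    obtain ⟨h, hr⟩ := hv
    obtain ⟨h', hr'⟩ := hv'
    exact hr' hr
  have hedge : ∀ u ∈ A₀, ∀ v ∈ B₀, ¬ G.Adj u v := fun u hu v hv huv => by
    simp only [A₀, B₀, Finset.mem_filter, Finset.mem_univ, true_and] at hu hv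
    obtain ⟨h, hr⟩ := hu
    obtain ⟨h', hr'⟩ := hv
    refine hr' (hr.trans (SimpleGraph.Adj.reachable ?_))
    simpa using huv
  have hun : A₀ ∪ B₀ = Uᶜ := by
    ext v
    simp only [A₀, B₀, Finset.mem_union, Finset.mem_filter, Finset.mem_univ, true_and,
      ← exists_or, Finset.mem_compl]
    constructor
    · rintro ⟨h, -⟩; simpa using h
    · exact fun h => ⟨by simpa using h, em _⟩
  have hsum : #A₀ + #B₀ = n - #U := by
    rw [← Finset.card_union_of_disjoint hdisj, hun, Finset.card_compl, hcard]
  have hA₀ : 1 ≤ #A₀ := Finset.card_pos.2 ⟨x, by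
    simp only [A₀, Finset.mem_filter, Finset.mem_univ, true_and]
    exact ⟨x.2, SimpleGraph.Reachable.refl _⟩⟩
  have hB₀ : 1 ≤ #B₀ := Finset.card_pos.2 ⟨y, by
    simp only [B₀, Finset.mem_filter, Finset.mem_univ, true_and]; exact ⟨y.2, hxy⟩⟩
  -- keep `n - k` vertices outside the separator, at least one on each side
  obtain ⟨A, hAs, hA⟩ := Finset.exists_subset_card_eq
    (show min #A₀ (n - k - 1) ≤ #A₀ from min_le_left _ _)
  obtain ⟨B, hBs, hB⟩ := Finset.exists_subset_card_eq
    (show n - k - min #A₀ (n - k - 1) ≤ #B₀ by omega)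
  have hd : Disjoint A B := hdisj.mono hAs hBs
  have he : ∀ u ∈ A, ∀ v ∈ B, ¬ G.Adj u v := fun u hu v hv => hedge u (hAs hu) v (hBs hv)
  by_cases hB1 : #B = 1
  · exact ⟨B, A, hd.symm, fun u hu v hv h => he v hv u hu h.symm, by omega, Or.inl hB1⟩
  · exact ⟨A, B, hd, he, by omega, by omega⟩

/-! ### The main inequality -/

theorem S_alpha_le_b_of_connAtMost (n k : ℕ) (hk : 1 ≤ k) (hkn : k ≤ n - 1)
    (hcard : Fintype.card V = n) (α : ℝ) (hα : 1 ≤ α)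
    (G : SimpleGraph V) (hconn : G.Connected) (hvc : ConnAtMost G k) :
    S α G ≤ b α n k ∧
    (S α G = b α n k ↔ Nonempty (G ≃g Gik n k 1)) := by
  have hn : k + 1 ≤ n := by
    have := Fintype.card_pos_iff.2 hconn.nonempty
    omega
  rw [← S_Gik_one hn α hα]
  suffices h : S α G ≤ S α (Gik n k 1) ∧ (S α G = S α (Gik n k 1) → Nonempty (G ≃g Gik n k 1)) from
    ⟨h.1, h.2, fun ⟨e⟩ => S_iso α hα e⟩
  obtain ⟨A, B, hd, he, hs, hc⟩ := exists_sep hk hkn hcard G hvc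
  rcases hc with hA | ⟨hA, hB⟩
  · obtain ⟨e, hle⟩ := exists_le_comap hcard G A B hd he hA hs
    have hm := S_mono α hα hle
    rw [S_iso α hα (SimpleGraph.Iso.comap e (Gik n k 1))] at hm
    exact ⟨hm.1, fun h => ⟨hm.2 h ▸ SimpleGraph.Iso.comap e (Gik n k 1)⟩⟩
  · obtain ⟨e, hle⟩ := exists_le_comap hcard G A B hd he rfl hs
    have hm := (S_mono α hα hle).1
    rw [S_iso α hα (SimpleGraph.Iso.comap e (Gik n k #A))] at hm
    have hlt := S_Gik_lt hk hA (by omega : k + #A + 2 ≤ n) α hα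
    rw [← S_Gik_one hn α hα] at hlt
    have := hm.trans_lt hlt
    exact ⟨this.le, fun h => absurd h this.ne⟩

end SLP
end
end

section
/- Let n, k be positive integers with 1 ≤ k ≤ n−1 and let G be a connected finite simple graph on n vertices with vertex connectivity at most k, having m edges. Then m ≤ (n² − 3n + 2k + 2)/2, with equality if and only if G is isomorphic to K_k ∨ (K_1 ∪ K_{n−k−1}). -/
/-!
Pass to the complement: since `G` and `Gᶜ` together have `n.choose 2` edges, the claim says that
`Gᶜ` has at least `n - k - 1` edges. A cut `U` with `|U| ≤ k` splits the remaining vertices into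
two nonempty parts of sizes `a`, `b` with no edge of `G` between them, so `Gᶜ` contains a complete
bipartite graph with `a * b ≥ a + b - 1 ≥ n - k - 1` edges (`exists_parts`). Equality forces one
part to be a single vertex, the other to have `n - k - 1` vertices, and `Gᶜ` to have no further
edge; this determines `G` up to isomorphism (`nonempty_iso_Gik`). If `k = n - 1`, a single vertex
together with the empty set plays the role of the two parts.
-/

open Matrix Finset

noncomputable section

namespace SLP

variable {V : Type*} [Fintype V] [DecidableEq V]

/-- The edges of the complete bipartite graph between `A` and `B`. -/
def crossEdges (A B : Finset V) : Finset (Sym2 V) :=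
  (A ×ˢ B).image fun p => s(p.1, p.2)

lemma mem_crossEdges {A B : Finset V} {x y : V} :
    s(x, y) ∈ crossEdges A B ↔ (x ∈ A ∧ y ∈ B) ∨ (y ∈ A ∧ x ∈ B) := by
  simp only [crossEdges, Finset.mem_image, Finset.mem_product, Prod.exists, Sym2.eq_iff]
  constructor
  · rintro ⟨a, b, ⟨ha, hb⟩, ⟨rfl, rfl⟩ | ⟨rfl, rfl⟩⟩
    · exact Or.inl ⟨ha, hb⟩
    · exact Or.inr ⟨ha, hb⟩
  · rintro (h | h)
    · exact ⟨x, y, h, Or.inl ⟨rfl, rfl⟩⟩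
    · exact ⟨y, x, h, Or.inr ⟨rfl, rfl⟩⟩

lemma card_crossEdges {A B : Finset V} (h : Disjoint A B) :
    (crossEdges A B).card = A.card * B.card := by
  rw [crossEdges, Finset.card_image_of_injOn, Finset.card_product]
  rintro ⟨a, b⟩ hp ⟨c, d⟩ hq heq
  simp only [Finset.coe_product, Set.mem_prod, Finset.mem_coe] at hp hq
  rcases Sym2.eq_iff.1 heq with ⟨h1, h2⟩ | ⟨h1, h2⟩
  · exact Prod.ext h1 h2
  · have hdA : d ∈ A := (show a = d from h1) ▸ hp.1
    exact absurd hq.2 (Finset.disjoint_left.1 h hdA)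

lemma card_edges_add_compl (G : SimpleGraph V) :
    Nat.card G.edgeSet + Nat.card Gᶜ.edgeSet = (Fintype.card V).choose 2 := by
  classical
  rw [Nat.card_eq_fintype_card, Nat.card_eq_fintype_card, ← SimpleGraph.edgeFinset_card,
    ← SimpleGraph.edgeFinset_card, ← SimpleGraph.card_edgeFinset_top_eq_card_choose_two,
    ← Finset.card_union_of_disjoint]
  · congr 1
    ext e
    induction e with | _ x y =>
    simp only [Finset.mem_union, SimpleGraph.mem_edgeFinset, SimpleGraph.mem_edgeSet,
      SimpleGraph.compl_adj, SimpleGraph.top_adj]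
    have := fun h : G.Adj x y => h.ne
    tauto
  · rw [SimpleGraph.disjoint_edgeFinset]
    exact disjoint_compl_right

lemma card_edges_of_compl_adj {G : SimpleGraph V}
    {A B : Finset V} (hd : Disjoint A B)
    (h : ∀ x y, Gᶜ.Adj x y ↔ (x ∈ A ∧ y ∈ B) ∨ (y ∈ A ∧ x ∈ B)) :
    Nat.card Gᶜ.edgeSet = A.card * B.card := by
  classical
  rw [← card_crossEdges hd, Nat.card_eq_fintype_card, ← SimpleGraph.edgeFinset_card]
  congr 1
  ext e
  induction e with | _ x y =>
  rw [SimpleGraph.mem_edgeFinset, SimpleGraph.mem_edgeSet, h, mem_crossEdges]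

/-- Two disjoint sets without edges of `G` between them contribute `|A| * |B|` edges to `Gᶜ`;
if these are all the edges of `Gᶜ`, then they determine its adjacency. -/
lemma mul_card_le_compl {G : SimpleGraph V}
    {A B : Finset V} (hd : Disjoint A B) (hAB : ∀ x ∈ A, ∀ y ∈ B, ¬ G.Adj x y) :
    A.card * B.card ≤ Nat.card Gᶜ.edgeSet ∧
    (Nat.card Gᶜ.edgeSet ≤ A.card * B.card →
      ∀ x y, Gᶜ.Adj x y ↔ (x ∈ A ∧ y ∈ B) ∨ (y ∈ A ∧ x ∈ B)) := by
  classical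
  have hsub : crossEdges A B ⊆ Gᶜ.edgeFinset := by
    intro e
    induction e with | _ x y =>
    rw [SimpleGraph.mem_edgeFinset, SimpleGraph.mem_edgeSet, mem_crossEdges]
    rintro (⟨hx, hy⟩ | ⟨hy, hx⟩)
    · exact ⟨fun h => Finset.disjoint_left.1 hd hx (h ▸ hy), hAB x hx y hy⟩
    · exact ⟨fun h => Finset.disjoint_left.1 hd hy (h ▸ hx), fun h => hAB y hy x hx h.symm⟩
  rw [← card_crossEdges hd, Nat.card_eq_fintype_card, ← SimpleGraph.edgeFinset_card]
  refine ⟨Finset.card_le_card hsub, fun hle x y => ?_⟩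
  rw [← mem_crossEdges, Finset.eq_of_subset_of_card_le hsub hle, SimpleGraph.mem_edgeFinset,
    SimpleGraph.mem_edgeSet]

/-- The two sides of a cut, ordered so that in the extremal case the first side is a single
vertex. -/
lemma exists_parts (n k : ℕ) (hk : 1 ≤ k)
    (hkn : k ≤ n - 1) (hcard : Fintype.card V = n) (G : SimpleGraph V) (hvc : ConnAtMost G k) :
    ∃ A B : Finset V, Disjoint A B ∧ (∀ x ∈ A, ∀ y ∈ B, ¬ G.Adj x y) ∧
      n - k - 1 ≤ A.card * B.card ∧ (A.card * B.card = n - k - 1 → A.card = 1) := by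
  classical
  by_cases hn : n ≤ k + 1
  · have : Nonempty V := Fintype.card_pos_iff.1 (by omega)
    obtain ⟨v⟩ := this
    exact ⟨{v}, ∅, by simp, by simp, by simp; omega, by simp⟩
  obtain ⟨U, hU, hdis⟩ := hvc.resolve_left (by omega)
  have hne : Nonempty ((↑U : Set V)ᶜ : Set V) := by
    by_contra hemp
    have : U = Finset.univ := by
      ext v
      simp only [Finset.mem_univ, iff_true]
      by_contra hv
      exact hemp ⟨⟨v, by simpa using hv⟩⟩
    rw [this, Finset.card_univ] at hU
    omega
  have hpre : ¬ (G.induce ((↑U : Set V)ᶜ)).Preconnected := fun h =>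
    hdis ((SimpleGraph.connected_iff _).2 ⟨h, hne⟩)
  simp only [SimpleGraph.Preconnected, not_forall] at hpre
  obtain ⟨x, y, hxy⟩ := hpre
  -- `A` is the component of `x` in `G - U`.
  let A : Finset V := Finset.univ.filter fun z =>
    ∃ hz : z ∈ ((↑U : Set V)ᶜ), (G.induce ((↑U : Set V)ᶜ)).Reachable x ⟨z, hz⟩
  let B : Finset V := Uᶜ \ A
  have hA : A ⊆ Uᶜ := by
    intro z hz
    obtain ⟨h, -⟩ := (Finset.mem_filter.1 hz).2
    simpa using h
  have hd : Disjoint A B := Finset.disjoint_sdiff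
  have hAB : ∀ a ∈ A, ∀ b ∈ B, ¬ G.Adj a b := by
    intro a ha b hb hab
    obtain ⟨h, hr⟩ := (Finset.mem_filter.1 ha).2
    obtain ⟨hbU, hbA⟩ := Finset.mem_sdiff.1 hb
    have hbU' : b ∈ ((↑U : Set V)ᶜ) := by simpa using hbU
    refine hbA (Finset.mem_filter.2 ⟨Finset.mem_univ _, hbU', hr.trans ?_⟩)
    exact SimpleGraph.Adj.reachable (show (G.induce _).Adj ⟨a, h⟩ ⟨b, hbU'⟩ from hab)
  have hapos : 1 ≤ A.card := Finset.card_pos.2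
    ⟨x, Finset.mem_filter.2 ⟨Finset.mem_univ _, x.2, SimpleGraph.Reachable.refl _⟩⟩
  have hbpos : 1 ≤ B.card := Finset.card_pos.2 ⟨y, Finset.mem_sdiff.2
    ⟨Finset.mem_compl.2 fun h => y.2 (Finset.mem_coe.2 h), fun hy => hxy (Finset.mem_filter.1 hy).2.2⟩⟩
  have hsum : n - k ≤ A.card + B.card := by
    have h1 : B.card = Uᶜ.card - A.card := Finset.card_sdiff_of_subset hA
    have h2 := Finset.card_le_card hA
    rw [Finset.card_compl, hcard] at h1 h2
    omega
  by_cases ha : A.card = 1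
  · exact ⟨A, B, hd, hAB, by rw [ha]; omega, fun _ => ha⟩
  by_cases hb : B.card = 1
  · exact ⟨B, A, hd.symm, fun b hb a ha h => hAB a ha b hb h.symm, by rw [hb]; omega, fun _ => hb⟩
  -- Two parts of size at least two give `a * b ≥ a + b`, hence strict inequality.
  have hmul : A.card + B.card ≤ A.card * B.card :=
    Nat.add_le_mul (by omega) (by omega)
  exact ⟨A, B, hd, hAB, by omega, fun h => by omega⟩

/-- The part of `K_k ∨ (K_i ∪ K_j)` to which a vertex belongs. -/
def colour {k i j : ℕ} : Fin k ⊕ (Fin i ⊕ Fin j) → Fin 3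
  | .inl _ => 0
  | .inr (.inl _) => 1
  | .inr (.inr _) => 2

lemma compl_Gik_adj (n k i : ℕ) (p q : Fin k ⊕ (Fin i ⊕ Fin (n - k - i))) :
    (Gik n k i)ᶜ.Adj p q ↔
      (colour p = 1 ∧ colour q = 2) ∨ (colour q = 1 ∧ colour p = 2) := by
  rcases p with p | p | p <;> rcases q with q | q | q <;>
    simp [Gik, join, colour]

lemma card_colour_fiber (k i j : ℕ) (c : Fin 3) :
    Fintype.card {p : Fin k ⊕ (Fin i ⊕ Fin j) // colour p = c} = ![k, i, j] c := by
  rw [Fintype.card_subtype, Finset.card_filter, Fintype.sum_sum_type, Fintype.sum_sum_type]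
  fin_cases c <;> simp [colour]

/-- A graph whose complement is a star with `n - k - 1` leaves and `k` isolated vertices is
`K_k ∨ (K_1 ∪ K_{n-k-1})`. -/
lemma nonempty_iso_Gik (n k : ℕ) (hk : 1 ≤ k)
    (hkn : k ≤ n - 1) (hcard : Fintype.card V = n) (G : SimpleGraph V) {A B : Finset V}
    (hd : Disjoint A B) (hA : A.card = 1) (hB : B.card = n - k - 1)
    (h : ∀ x y, Gᶜ.Adj x y ↔ (x ∈ A ∧ y ∈ B) ∨ (y ∈ A ∧ x ∈ B)) :
    Nonempty (G ≃g Gik n k 1) := by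
  classical
  let f : V → Fin 3 := fun x => if x ∈ A then 1 else if x ∈ B then 2 else 0
  have f1 : ∀ x, f x = 1 ↔ x ∈ A := by
    intro x
    by_cases h1 : x ∈ A <;> by_cases h2 : x ∈ B <;> simp [f, h1, h2]
  have f2 : ∀ x, f x = 2 ↔ x ∈ B := by
    intro x
    by_cases h1 : x ∈ A
    · simp [f, h1, Finset.disjoint_left.1 hd h1]
    · by_cases h2 : x ∈ B <;> simp [f, h1, h2]
  have f0 : ∀ x, f x = 0 ↔ x ∈ (A ∪ B)ᶜ := by
    intro x
    by_cases h1 : x ∈ A <;> by_cases h2 : x ∈ B <;> simp [f, h1, h2]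
  have hfib : ∀ c, Nonempty ({x // f x = c} ≃
      {p : Fin k ⊕ (Fin 1 ⊕ Fin (n - k - 1)) // colour p = c}) := by
    intro c
    refine ⟨Fintype.equivOfCardEq ?_⟩
    rw [card_colour_fiber, Fintype.card_subtype]
    fin_cases c
    · have : (Finset.univ.filter fun x => f x = 0) = (A ∪ B)ᶜ := by ext x; simp [f0]
      simp only [Fin.zero_eta, Fin.isValue, this, Matrix.cons_val_zero]
      rw [Finset.card_compl, Finset.card_union_of_disjoint hd, hA, hB, hcard]
      omega
    · have : (Finset.univ.filter fun x => f x = 1) = A := by ext x; simp [f1]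
      simpa [this] using hA
    · have : (Finset.univ.filter fun x => f x = 2) = B := by ext x; simp [f2]
      simpa [this] using hB
  let E := Equiv.ofFiberEquiv fun c => (hfib c).some
  have hE : ∀ x, colour (E x) = f x := Equiv.ofFiberEquiv_map _
  refine ⟨⟨E, fun {x y} => ?_⟩⟩
  have key : (Gik n k 1)ᶜ.Adj (E x) (E y) ↔ Gᶜ.Adj x y := by
    rw [compl_Gik_adj, h, hE, hE, f1, f2, f1, f2]
  rw [SimpleGraph.compl_adj, SimpleGraph.compl_adj, E.injective.ne_iff] at key
  have h1 := fun h : G.Adj x y => h.ne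
  have h2 : (Gik n k 1).Adj (E x) (E y) → x ≠ y := fun h e => h.ne (congrArg E e)
  tauto

lemma card_compl_of_iso_Gik (n k : ℕ)
    (G : SimpleGraph V) (E : G ≃g Gik n k 1) : Nat.card Gᶜ.edgeSet = n - k - 1 := by
  classical
  let P : Fin 3 → Finset V := fun c => Finset.univ.filter fun x => colour (E x) = c
  have hP : ∀ c, (P c).card = ![k, 1, n - k - 1] c := by
    intro c
    rw [← card_colour_fiber, ← Fintype.card_subtype]
    exact Fintype.card_congr (E.toEquiv.subtypeEquiv fun _ => Iff.rfl)
  have hd : Disjoint (P 1) (P 2) := by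
    rw [Finset.disjoint_left]
    intro x h1 h2
    simp only [P, Finset.mem_filter] at h1 h2
    exact absurd (h1.2.symm.trans h2.2) (by decide)
  rw [card_edges_of_compl_adj hd, hP, hP]
  · simp
  · intro x y
    have := compl_Gik_adj n k 1 (E x) (E y)
    rw [SimpleGraph.compl_adj, E.map_adj_iff, E.injective.ne_iff] at this
    rw [SimpleGraph.compl_adj, this]
    simp [P]

theorem edge_count_le_of_connAtMost (n k : ℕ) (hk : 1 ≤ k) (hkn : k ≤ n - 1)
    (hcard : Fintype.card V = n) (G : SimpleGraph V) (hconn : G.Connected)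
    (hvc : ConnAtMost G k) :
    (Nat.card G.edgeSet : ℝ) ≤ ((n : ℝ) ^ 2 - 3 * n + 2 * k + 2) / 2 ∧
    ((Nat.card G.edgeSet : ℝ) = ((n : ℝ) ^ 2 - 3 * n + 2 * k + 2) / 2 ↔
      Nonempty (G ≃g Gik n k 1)) := by
  obtain ⟨A, B, hd, hAB, hle, heq⟩ := exists_parts n k hk hkn hcard G hvc
  obtain ⟨hmul, hext⟩ := mul_card_le_compl hd hAB
  have htot := card_edges_add_compl G
  rw [hcard] at htot
  have htotR : (Nat.card G.edgeSet : ℝ) + Nat.card Gᶜ.edgeSet = n * (n - 1) / 2 := by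
    rw [← Nat.cast_choose_two, ← htot]
    push_cast
    rfl
  have hcast : ((n - k - 1 : ℕ) : ℝ) = n - k - 1 := by
    rw [Nat.cast_sub (by omega), Nat.cast_sub (by omega), Nat.cast_one]
  have hge : ((n - k - 1 : ℕ) : ℝ) ≤ Nat.card Gᶜ.edgeSet := by
    exact_mod_cast hle.trans hmul
  rw [hcast] at hge
  refine ⟨by linarith, fun h => ?_, fun ⟨E⟩ => ?_⟩
  · have hc : Nat.card Gᶜ.edgeSet = n - k - 1 := by
      have : (Nat.card Gᶜ.edgeSet : ℝ) = ((n - k - 1 : ℕ) : ℝ) := by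
        rw [hcast]
        linarith
      exact_mod_cast this
    have hA : A.card = 1 := heq (by omega)
    rw [hA, one_mul] at hmul hle
    exact nonempty_iso_Gik n k hk hkn hcard G hd hA (by omega)
      (hext (by rw [hA, one_mul]; omega))
  · rw [card_compl_of_iso_Gik n k G E, hcast] at htotR
    linarith

end SLP
end
end
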